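/- (Uniform-norm error for nonlocal problems with non-symmetric polygonal interaction neighborhoods.) Let Ω ⊂ ℝ² be bounded and open, let δ₀ ∈ (0,1], μ ∈ {0,1}, and A, B, M, R > 0, and suppose x* ∈ ℝ² is such that Ω̂_{δ₀} is contained in the closed ball B̄_R(x*). Then there is a constant C > 0, depending only on Ω, δ₀, A, B, M, R, with the following property. Let δ ∈ (0,δ₀] and r ∈ [δ/2, δ], let γ̃ satisfy the radial kernel conditions with horizon δ in dimension 2 and ∫_{B_δ(0)} γ̃(|z|) dz < ∞, and set D := ∫_{r ≤ |z| ≤ δ} |z|² γ̃(|z|) dz; assume D ≤ 1/2 and 4R·D/r ≤ 1. Let k : Ω̂_δ × Ω̂_δ → [0,∞) be measurable such that for every x ∈ Ω there is a measurable weight m_x : ℝ² → [0,1] with m_x(z) = 1 for |z| ≤ r, m_x(z) = 0 for |z| ≥ δ, and k(x, x+z) = γ̃(|z|) m_x(z) for almost every z. Let u₀ : ℝ² → ℝ be four times continuously differentiable on an open neighborhood of the closure of Ω̂_δ with ‖D^j u₀(y)‖ ≤ M for all y ∈ Ω̂_δ and j = 0,…,4, and set f₀ = −Δu₀ on Ω.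 Let f_δ : Ω → ℝ satisfy sup_Ω |f_δ − f₀| ≤ A δ², let g_δ : Ω_δ^c → ℝ satisfy sup_{Ω_δ^c} |g_δ − u₀| ≤ B δ^{2+μ}, and let u : Ω̂_δ → ℝ be bounded and measurable with −2∫_{Ω̂_δ} (u(y) − u(x)) k(x,y) dy = f_δ(x) for every x ∈ Ω and u = g_δ on Ω_δ^c. Then sup_{x∈Ω} |u(x) − u₀(x)| ≤ C (δ² + δ^{-1} D). -/

import Mathlib

open MeasureTheory Metric Set

noncomputable section

/-- Surface measure of the unit sphere in `ℝ^d`, expressed as `d` times the volume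
of the unit ball. -/
def unitSphereArea (d : ℕ) : ℝ :=
  d * (volume (ball (0 : EuclideanSpace ℝ (Fin d)) 1)).toReal

/-- The radial kernel conditions with horizon `δ` in dimension `d`. -/
def RadialKernel (d : ℕ) (δ : ℝ) (γ : ℝ → ℝ) : Prop :=
  Measurable γ ∧ (∀ s, 0 < s → s < δ → 0 < γ s) ∧ (∀ s, δ ≤ s → γ s = 0) ∧
    IntegrableOn γ (Ioo 0 δ) ∧
    unitSphereArea d * (∫ s in Ioo 0 δ, s ^ (d + 1) * γ s) = d

/-- The part of the complement of `Ω` within distance `δ` of the boundary. -/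
def omegaC {d : ℕ} (Ω : Set (EuclideanSpace ℝ (Fin d))) (δ : ℝ) :
    Set (EuclideanSpace ℝ (Fin d)) :=
  {y | y ∉ Ω ∧ infDist y (frontier Ω) < δ}

/-- `Ω̂_δ = Ω ∪ Ω_δ^c`. -/
def hatΩ {d : ℕ} (Ω : Set (EuclideanSpace ℝ (Fin d))) (δ : ℝ) :
    Set (EuclideanSpace ℝ (Fin d)) :=
  Ω ∪ omegaC Ω δ

/-- The Laplacian of `u : ℝ^d → ℝ`, as the trace of the second derivative. -/
def lap (d : ℕ) (u : EuclideanSpace ℝ (Fin d) → ℝ) (x : EuclideanSpace ℝ (Fin d)) : ℝ :=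
  ∑ i : Fin d, iteratedFDeriv ℝ 2 u x ![EuclideanSpace.single i 1, EuclideanSpace.single i 1]

abbrev E2 := EuclideanSpace ℝ (Fin 2)

lemma aux_maxprinciple {X : Type*} (T Om : Set X) (w : X → ℝ) (E N b Mw : ℝ) (hE : 0 < E)
    (hN : 0 ≤ N) (hw : ∀ x ∈ T, w x ≤ Mw)
    (hmax : ∀ x ∈ Om, ∀ S, (∀ y ∈ T, w y ≤ S) → E ≤ (S - w x) * N)
    (hb : ∀ x ∈ T, x ∉ Om → w x ≤ b) : ∀ x ∈ T, w x ≤ b := by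
  intro x₀ hx₀
  by_contra! hlt
  have hbdd : BddAbove (w '' T) := ⟨Mw, by rintro _ ⟨x, hx, rfl⟩; exact hw x hx⟩
  set S := sSup (w '' T) with hS
  have hle : ∀ y ∈ T, w y ≤ S := fun y hy => le_csSup hbdd ⟨y, hy, rfl⟩
  have hbS : b < S := lt_of_lt_of_le hlt (hle x₀ hx₀)
  have h2 : S - E / (N + 1) < S := by
    have : 0 < E / (N + 1) := by positivity
    linarith
  obtain ⟨_, ⟨x, hx, rfl⟩, hxS⟩ := exists_lt_of_lt_csSup (s := w '' T) ⟨_, x₀, hx₀, rfl⟩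
    (max_lt hbS h2)
  have hx1 := lt_of_le_of_lt (le_max_left _ _) hxS
  have hx2 := lt_of_le_of_lt (le_max_right _ _) hxS
  have hxO : x ∈ Om := by
    by_contra h
    exact absurd (hb x hx h) (not_le.mpr hx1)
  have h3 := hmax x hxO S hle
  have h4 : (S - w x) * N ≤ E / (N + 1) * N := by
    apply mul_le_mul_of_nonneg_right _ hN
    linarith
  have h5 : E / (N + 1) * N < E := by
    rw [div_mul_eq_mul_div, div_lt_iff₀ (by linarith)]
    nlinarith
  linarith

lemma aux_ball_subset (Ω : Set E2) (δ : ℝ) (x : E2) (hx : x ∈ Ω) :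
    ball x δ ⊆ hatΩ Ω δ := by
  intro y hy
  by_cases h : y ∈ Ω
  · exact Or.inl h
  · refine Or.inr ⟨h, ?_⟩
    have hne : Ωᶜ ≠ Set.univ := by
      intro h'
      rw [Set.compl_univ_iff] at h'
      simp [h'] at hx
    obtain ⟨w, hw, hd⟩ := exists_mem_frontier_infDist_compl_eq_dist (s := Ωᶜ) (x := y) h hne
    rw [compl_compl] at hd
    rw [frontier_compl] at hw
    calc infDist y (frontier Ω) ≤ dist y w := infDist_le_dist_of_mem hw
      _ = infDist y Ω := hd.symm
      _ ≤ dist y x := infDist_le_dist_of_mem hx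
      _ < δ := hy

lemma aux_hat_mono (Ω : Set E2) (δ δ₀ : ℝ) (h : δ ≤ δ₀) : hatΩ Ω δ ⊆ hatΩ Ω δ₀ := by
  rintro y (hy | ⟨h1, h2⟩)
  · exact Or.inl hy
  · exact Or.inr ⟨h1, lt_of_lt_of_le h2 h⟩

lemma aux_hat_meas (Ω : Set E2) (ho : IsOpen Ω) (δ : ℝ) : MeasurableSet (hatΩ Ω δ) := by
  refine ho.measurableSet.union ?_
  have : omegaC Ω δ = Ωᶜ ∩ {y | infDist y (frontier Ω) < δ} := rfl
  rw [this]
  exact ho.measurableSet.compl.inter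
    (isOpen_lt (continuous_infDist_pt _) continuous_const).measurableSet

/-- one step of Taylor's estimate -/
lemma aux_step (p p' : ℝ → ℝ) (K : ℝ) (hK : 0 ≤ K)
    (hd : ∀ t ∈ Icc (0 : ℝ) 1, HasDerivAt p (p' t) t) (h0 : p 0 = 0)
    (hb : ∀ t ∈ Icc (0 : ℝ) 1, |p' t| ≤ K) : ∀ t ∈ Icc (0 : ℝ) 1, |p t| ≤ K := by
  intro t ht
  have := Convex.norm_image_sub_le_of_norm_hasDerivWithin_le (f := p) (f' := p') (C := K)
    (fun x hx => (hd x hx).hasDerivWithinAt) (by simpa using hb) (convex_Icc 0 1)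
    (left_mem_Icc.mpr zero_le_one) ht
  rw [h0, sub_zero, sub_zero, Real.norm_eq_abs, Real.norm_eq_abs, abs_of_nonneg ht.1] at this
  nlinarith [ht.2]

lemma aux_taylor1d (h : ℕ → ℝ → ℝ) (K : ℝ) (hK : 0 ≤ K)
    (hd : ∀ n < 4, ∀ t ∈ Icc (0 : ℝ) 1, HasDerivAt (h n) (h (n + 1) t) t)
    (hb : ∀ t ∈ Icc (0 : ℝ) 1, |h 4 t| ≤ K) :
    |h 0 1 - h 0 0 - (h 1 0 + h 2 0 / 2 + h 3 0 / 6)| ≤ K := by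
  have s3 := aux_step (fun t => h 3 t - h 3 0) (h 4) K hK
    (fun t ht => (hd 3 (by norm_num) t ht).sub_const _) (by simp) hb
  have s2 := aux_step (fun t => h 2 t - h 2 0 - t * h 3 0) (fun t => h 3 t - h 3 0) K hK
    (fun t ht => by
      have := ((hd 2 (by norm_num) t ht).sub_const (h 2 0)).sub ((hasDerivAt_id' t).mul_const (h 3 0))
      exact this.congr_deriv (by ring)) (by simp) s3
  have s1 := aux_step (fun t => h 1 t - h 1 0 - t * h 2 0 - t ^ 2 / 2 * h 3 0)
    (fun t => h 2 t - h 2 0 - t * h 3 0) K hK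
    (fun t ht => by
      have := (((hd 1 (by norm_num) t ht).sub_const (h 1 0)).sub
        ((hasDerivAt_id' t).mul_const (h 2 0))).sub
        (((hasDerivAt_pow 2 t).div_const 2).mul_const (h 3 0))
      exact this.congr_deriv (by norm_num)) (by simp) s2
  have s0 := aux_step (fun t => h 0 t - h 0 0 - t * h 1 0 - t ^ 2 / 2 * h 2 0 - t ^ 3 / 6 * h 3 0)
    (fun t => h 1 t - h 1 0 - t * h 2 0 - t ^ 2 / 2 * h 3 0) K hK
    (fun t ht => by
      have := ((((hd 0 (by norm_num) t ht).sub_const (h 0 0)).sub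
        ((hasDerivAt_id' t).mul_const (h 1 0))).sub
        (((hasDerivAt_pow 2 t).div_const 2).mul_const (h 2 0))).sub
        (((hasDerivAt_pow 3 t).div_const 6).mul_const (h 3 0))
      exact this.congr_deriv (by norm_num; left; ring)) (by simp) s1
  have := s0 1 (right_mem_Icc.mpr zero_le_one)
  convert this using 2
  ring

lemma aux_line (u : E2 → ℝ) (x z : E2) (n : ℕ) (t : ℝ)
    (hc : ContDiffAt ℝ 4 u (x + t • z)) (hn : n < 4) :
    HasDerivAt (fun t : ℝ => iteratedFDeriv ℝ n u (x + t • z) (fun _ => z))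
      (iteratedFDeriv ℝ (n + 1) u (x + t • z) (fun _ => z)) t := by
  have h1 : DifferentiableAt ℝ (iteratedFDeriv ℝ n u) (x + t • z) :=
    hc.differentiableAt_iteratedFDeriv (by exact_mod_cast hn)
  have h2 := h1.hasFDerivAt.continuousMultilinear_apply_const (fun _ => z)
  have h3 : HasDerivAt (fun t : ℝ => x + t • z) z t := by
    simpa using ((hasDerivAt_id t).smul_const z).const_add x
  have := h2.comp_hasDerivAt t h3
  rw [iteratedFDeriv_succ_apply_left]
  exact this

lemma aux_taylor (u : E2 → ℝ) (x z : E2) (M : ℝ) 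
    (hc : ∀ t ∈ Icc (0 : ℝ) 1, ContDiffAt ℝ 4 u (x + t • z))
    (hM : ∀ t ∈ Icc (0 : ℝ) 1, ∀ j ≤ 4, ‖iteratedFDeriv ℝ j u (x + t • z)‖ ≤ M) :
    |u (x + z) - u x - (iteratedFDeriv ℝ 1 u x (fun _ => z) + iteratedFDeriv ℝ 2 u x (fun _ => z) / 2
      + iteratedFDeriv ℝ 3 u x (fun _ => z) / 6)| ≤ M * ‖z‖ ^ 4 ∧
    |u (x + z) - u x| ≤ M * ‖z‖ := by
  have hM0 : 0 ≤ M := (norm_nonneg _).trans (hM 0 (by simp) 0 (by simp))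
  have hb : ∀ j ≤ 4, ∀ t ∈ Icc (0 : ℝ) 1,
      |iteratedFDeriv ℝ j u (x + t • z) (fun _ => z)| ≤ M * ‖z‖ ^ j := by
    intro j hj t ht
    have := (iteratedFDeriv ℝ j u (x + t • z)).le_opNorm (fun _ => z)
    simp only [Finset.prod_const, Finset.card_univ, Fintype.card_fin, Real.norm_eq_abs] at this
    exact this.trans (mul_le_mul_of_nonneg_right (hM t ht j hj) (by positivity))
  constructor
  · have := aux_taylor1d (fun n t => iteratedFDeriv ℝ n u (x + t • z) (fun _ => z))
      (M * ‖z‖ ^ 4) (by positivity) (fun n hn t ht => aux_line u x z n t (hc t ht) hn)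
      (hb 4 le_rfl)
    simpa using this
  · have := aux_step (fun t => u (x + t • z) - u x)
      (fun t => iteratedFDeriv ℝ 1 u (x + t • z) (fun _ => z)) (M * ‖z‖) (by positivity)
      (fun t ht => by
        have := (aux_line u x z 0 t (hc t ht) (by norm_num)).sub_const (u x)
        simpa using this) (by simp) (by simpa using hb 1 (by norm_num)) 1 (by simp)
    simpa using this

/-- rotation by 90 degrees -/
def rotJ : E2 ≃ₗᵢ[ℝ] E2 where
  toFun v := !₂[-v 1, v 0]
  invFun v := !₂[v 1, -v 0]
  map_add' v w := by ext i; fin_cases i <;> simp; ring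
  map_smul' c v := by ext i; fin_cases i <;> simp
  left_inv v := by ext i; fin_cases i <;> simp
  right_inv v := by ext i; fin_cases i <;> simp
  norm_map' v := by
    simp [EuclideanSpace.norm_eq]
    ring_nf

lemma aux_sum_rot (T : ContinuousMultilinearMap ℝ (fun _ : Fin 2 => E2) ℝ) (z : E2) :
    T (fun _ => z) + T (fun _ => rotJ z) = ‖z‖ ^ 2 *
      ∑ i : Fin 2, T ![EuclideanSpace.single i 1, EuclideanSpace.single i 1] := by
  set e : Fin 2 → E2 := fun i => EuclideanSpace.single i 1 with he
  have key : ∀ a b : ℝ, T (fun _ => a • e 0 + b • e 1) = a ^ 2 * T ![e 0, e 0] +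
      a * b * (T ![e 0, e 1] + T ![e 1, e 0]) + b ^ 2 * T ![e 1, e 1] := by
    intro a b
    have h0 : (fun _ : Fin 2 => a • e 0 + b • e 1) =
      (fun _ : Fin 2 => ∑ j : Fin 2, (![a, b] j) • e j) := by
      funext i; simp [Fin.sum_univ_two]
    rw [h0, T.map_sum]
    have h1 : ∀ f : Fin 2 → Fin 2, T (fun i => ![a, b] (f i) • e (f i)) =
      ![a, b] (f 0) * ![a, b] (f 1) * T ![e (f 0), e (f 1)] := by
      intro f
      rw [T.map_smul_univ]
      simp only [Fin.prod_univ_two, smul_eq_mul]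
      congr 2
      funext i; fin_cases i <;> rfl
    simp only [h1]
    rw [← (finTwoArrowEquiv (Fin 2)).symm.sum_comp]
    simp [Fintype.sum_prod_type, Fin.sum_univ_two]
    ring
  have hz : z = z 0 • e 0 + z 1 • e 1 := by
    ext i; fin_cases i <;> simp [he]
  have hJ : rotJ z = (-z 1) • e 0 + z 0 • e 1 := by
    ext i; fin_cases i <;> simp [he, rotJ]
  have hn : ‖z‖ ^ 2 = z 0 ^ 2 + z 1 ^ 2 := by
    rw [EuclideanSpace.real_norm_sq_eq]; simp [Fin.sum_univ_two]
  have hT : T (fun _ => z) = T (fun _ => z 0 • e 0 + z 1 • e 1) := by rw [← hz]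
  rw [hJ, hT, key, key, hn, Fin.sum_univ_two]
  change _ = _ * (T ![e 0, e 0] + T ![e 1, e 1])
  ring

def pw (γ : ℝ → ℝ) (r : ℝ) (z : E2) : ℝ := (Iio r).indicator γ ‖z‖
def qw (γ : ℝ → ℝ) (r δ : ℝ) (z : E2) : ℝ := (Ico r δ).indicator γ ‖z‖

lemma aux_integ (p F : E2 → ℝ) (c : ℝ) (hp : Integrable p) (hF : Measurable F)
    (hb : ∀ z, p z ≠ 0 → |F z| ≤ c) : Integrable (fun z => F z * p z) := by
  refine Integrable.mono' (g := fun z => c * |p z|) (hp.abs.const_mul c)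
    (hF.aestronglyMeasurable.mul hp.aestronglyMeasurable) (Filter.Eventually.of_forall fun z => ?_)
  rw [Real.norm_eq_abs, abs_mul]
  by_cases h : p z = 0
  · simp [h]
  · exact mul_le_mul_of_nonneg_right (hb z h) (abs_nonneg _)

lemma aux_odd (F p : E2 → ℝ) (hF : ∀ z, F (-z) = -F z) (hp : ∀ z, p (-z) = p z) :
    ∫ z, F z * p z = 0 := by
  have := integral_neg_eq_self (fun z => F z * p z) (volume : Measure E2)
  simp only [hF, hp, neg_mul, integral_neg] at this
  linarith

lemma aux_quad (T : ContinuousMultilinearMap ℝ (fun _ : Fin 2 => E2) ℝ) (p : E2 → ℝ)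
    (hp : ∀ z, p (rotJ z) = p z) (hi : Integrable (fun z => T (fun _ => z) * p z)) :
    ∫ z, T (fun _ => z) * p z = 1 / 2 *
      (∑ i : Fin 2, T ![EuclideanSpace.single i 1, EuclideanSpace.single i 1]) *
      ∫ z, ‖z‖ ^ 2 * p z := by
  have hm := rotJ.measurePreserving
  have hemb : MeasurableEmbedding rotJ := rotJ.toHomeomorph.measurableEmbedding
  have h1 := hm.integral_comp hemb (fun z => T (fun _ => z) * p z)
  have h2 := (hm.integrable_comp_emb hemb).mpr hi
  have h3 : ∫ z, (T (fun _ => z) * p z + T (fun _ => rotJ z) * p (rotJ z)) =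
      (∫ z, T (fun _ => z) * p z) + ∫ z, T (fun _ => rotJ z) * p (rotJ z) :=
    integral_add hi h2
  have h4 : ∀ z, T (fun _ => z) * p z + T (fun _ => rotJ z) * p (rotJ z) =
      (∑ i : Fin 2, T ![EuclideanSpace.single i 1, EuclideanSpace.single i 1]) *
        (‖z‖ ^ 2 * p z) := by
    intro z
    rw [hp, ← add_mul, aux_sum_rot]; ring
  simp only [h4] at h3
  rw [integral_const_mul, h1] at h3
  linarith

lemma aux_facts (γ : ℝ → ℝ) (r δ D : ℝ) (hδ : 0 < δ) (hr : r ∈ Icc (δ / 2) δ)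
    (hγ : RadialKernel 2 δ γ)
    (hi : IntegrableOn (fun z : E2 => γ ‖z‖) (ball 0 δ))
    (hD : D = (∫ z in {z : E2 | r ≤ ‖z‖ ∧ ‖z‖ ≤ δ}, ‖z‖ ^ 2 * γ ‖z‖)) :
    Integrable (pw γ r) ∧ Integrable (qw γ r δ) ∧ (∀ᵐ z, 0 ≤ pw γ r z) ∧
    (∀ z, 0 ≤ qw γ r δ z) ∧ ∫ z, ‖z‖ ^ 2 * pw γ r z = 2 - D ∧
    ∫ z, ‖z‖ ^ 2 * qw γ r δ z = D := by
  obtain ⟨hmeas, hpos, hzero, -, hnorm⟩ := hγ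
  obtain ⟨hr1, hr2⟩ := hr
  have hr0 : 0 < r := by linarith
  have hi' : Integrable ((ball (0 : E2) δ).indicator (fun z : E2 => γ ‖z‖)) :=
    (integrable_indicator_iff measurableSet_ball).mpr hi
  have hp : pw γ r = (ball (0 : E2) r).indicator ((ball (0 : E2) δ).indicator (fun z : E2 => γ ‖z‖)) := by
    funext z
    by_cases h : ‖z‖ < r
    · have : ‖z‖ < δ := by linarith
      simp [pw, indicator, h, this]
    · simp [pw, indicator, h]
  have hq : qw γ r δ = (ball (0 : E2) r)ᶜ.indicator ((ball (0 : E2) δ).indicator (fun z : E2 => γ ‖z‖)) := by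
    funext z
    by_cases h : ‖z‖ < r
    · have : ¬ r ≤ ‖z‖ := by linarith
      simp [qw, indicator, h, this]
    · have : r ≤ ‖z‖ := by linarith
      simp [qw, indicator, h, this]
  have hpi : Integrable (pw γ r) := by rw [hp]; exact hi'.indicator measurableSet_ball
  have hqi : Integrable (qw γ r δ) := by rw [hq]; exact hi'.indicator measurableSet_ball.compl
  have hqd : ∫ z, ‖z‖ ^ 2 * qw γ r δ z = D := by
    have hms : MeasurableSet {z : E2 | r ≤ ‖z‖ ∧ ‖z‖ ≤ δ} :=
      (measurableSet_le measurable_const measurable_norm).inter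
        (measurableSet_le measurable_norm measurable_const)
    rw [hD, ← integral_indicator hms]
    congr 1
    funext z
    by_cases h : r ≤ ‖z‖
    · rcases lt_trichotomy ‖z‖ δ with h2 | h2 | h2
      · simp [qw, indicator, h, h2, h2.le]
      · simp [qw, indicator, h2, hzero]
      · simp [qw, indicator, h, h2.not_gt, h2.not_ge]
    · simp [qw, indicator, h]
  have hnz : ∀ᵐ z : E2, z ≠ 0 := by
    rw [ae_iff]; simp
  refine ⟨hpi, hqi, ?_, ?_, ?_, hqd⟩
  · filter_upwards [hnz] with z hz
    by_cases h : ‖z‖ < r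
    · simp [pw, indicator, h, (hpos _ (norm_pos_iff.mpr hz) (by linarith)).le]
    · simp [pw, indicator, h]
  · intro z
    unfold qw indicator
    split_ifs with h
    · exact (hpos _ (by linarith [h.1]) h.2).le
    · exact le_rfl
  · have hs : ∫ z : E2, (fun s : ℝ => s ^ 2 * (Iio δ).indicator γ s) ‖z‖ = 2 := by
      rw [integral_fun_norm_addHaar (volume : Measure E2)
        (fun s : ℝ => s ^ 2 * (Iio δ).indicator γ s)]
      have h1 : ∫ y in Ioi (0:ℝ), y ^ (Module.finrank ℝ E2 - 1) • (y ^ 2 * (Iio δ).indicator γ y)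
          = ∫ s in Ioo 0 δ, s ^ (2 + 1) * γ s := by
        rw [← integral_indicator measurableSet_Ioi, ← integral_indicator measurableSet_Ioo]
        congr 1
        funext s
        by_cases h0 : 0 < s <;> by_cases h2 : s < δ <;> simp [indicator, h0, h2]
        ring
      rw [h1]
      have h2 := hnorm
      unfold unitSphereArea at h2
      simp only [finrank_euclideanSpace, Fintype.card_fin, nsmul_eq_mul, smul_eq_mul]
      rw [← mul_assoc]
      simpa [Measure.real] using h2
    have hsum : ∀ z : E2, ‖z‖ ^ 2 * (Iio δ).indicator γ ‖z‖ =
        ‖z‖ ^ 2 * pw γ r z + ‖z‖ ^ 2 * qw γ r δ z := by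
      intro z
      by_cases h : ‖z‖ < r
      · have h1 : ¬ r ≤ ‖z‖ := by linarith
        have h2 : ‖z‖ < δ := by linarith
        simp [pw, qw, indicator, h, h1, h2]
      · have h1 : r ≤ ‖z‖ := by linarith
        simp [pw, qw, indicator, h, h1]
    simp only [hsum] at hs
    rw [integral_add, hqd] at hs
    · linarith
    · refine aux_integ _ _ (r ^ 2) hpi (by fun_prop) fun z hz => ?_
      have : ‖z‖ < r := by
        by_contra h; exact hz (by simp [pw, indicator, h])
      rw [abs_of_nonneg (by positivity)]
      gcongr
    · refine aux_integ _ _ (δ ^ 2) hqi (by fun_prop) fun z hz => ?_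
      have : ‖z‖ < δ := by
        by_contra h; exact hz (by simp [qw, indicator, h])
      rw [abs_of_nonneg (by positivity)]
      gcongr

lemma pw_supp {γ : ℝ → ℝ} {r : ℝ} {z : E2} (h : pw γ r z ≠ 0) : ‖z‖ < r := by
  by_contra h'; exact h (by simp [pw, indicator, h'])

lemma qw_supp {γ : ℝ → ℝ} {r δ : ℝ} {z : E2} (h : qw γ r δ z ≠ 0) : r ≤ ‖z‖ ∧ ‖z‖ < δ := by
  by_contra h'; exact h (by simp only [qw, indicator, mem_Ico, h', if_false])

lemma aux_shell (γ : ℝ → ℝ) (r δ D c : ℝ) (hr : 0 < r) (hc : 0 ≤ c) (m F : E2 → ℝ)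
    (hm : ∀ z, m z ∈ Icc (0 : ℝ) 1)
    (hqi : Integrable (qw γ r δ)) (hq0 : ∀ z, 0 ≤ qw γ r δ z)
    (hqD : ∫ z, ‖z‖ ^ 2 * qw γ r δ z = D)
    (hF : ∀ z, ‖z‖ < δ → |F z| ≤ c * ‖z‖) :
    |∫ z, F z * (qw γ r δ z * m z)| ≤ c * D / r := by
  have hi : Integrable (fun z => ‖z‖ ^ 2 * qw γ r δ z) := by
    refine aux_integ _ _ (δ ^ 2) hqi (by fun_prop) fun z hz => ?_
    have := (qw_supp hz).2
    rw [abs_of_nonneg (by positivity)]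
    gcongr
  have h := norm_integral_le_of_norm_le (f := fun z => F z * (qw γ r δ z * m z))
    (hi.const_mul (c / r)) (Filter.Eventually.of_forall fun z => by
      rw [Real.norm_eq_abs, abs_mul, abs_mul, abs_of_nonneg (hq0 z), abs_of_nonneg (hm z).1]
      by_cases hz : qw γ r δ z = 0
      · simp [hz]
      · obtain ⟨h1, h2⟩ := qw_supp hz
        have h3 := hF z h2
        have h4 : c * ‖z‖ ≤ c / r * ‖z‖ ^ 2 := by
          rw [div_mul_eq_mul_div, le_div_iff₀ hr]
          nlinarith [mul_nonneg hc (norm_nonneg z), mul_nonneg (mul_nonneg hc (norm_nonneg z)) (sub_nonneg.mpr h1)]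
        have h5 : qw γ r δ z * m z ≤ qw γ r δ z := mul_le_of_le_one_right (hq0 z) (hm z).2
        calc |F z| * (qw γ r δ z * m z) ≤ (c / r * ‖z‖ ^ 2) * qw γ r δ z := by
              apply mul_le_mul (h3.trans h4) h5 (mul_nonneg (hq0 z) (hm z).1) (by positivity)
          _ = _ := by ring)
  rw [integral_const_mul, hqD, Real.norm_eq_abs] at h
  calc _ ≤ _ := h
    _ = _ := by ring

lemma aux_qm (γ : ℝ → ℝ) (r δ : ℝ) (m : E2 → ℝ) (hmm : Measurable m)
    (hm : ∀ z, m z ∈ Icc (0 : ℝ) 1) (hqi : Integrable (qw γ r δ)) :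
    Integrable (fun z => qw γ r δ z * m z) := by
  have := aux_integ (qw γ r δ) m 1 hqi hmm (fun z _ => by
    rw [abs_of_nonneg (hm z).1]; exact (hm z).2)
  simpa [mul_comm] using this

lemma aux_split (γ : ℝ → ℝ) (r δ c : ℝ) (hr : r ≤ δ) (m F : E2 → ℝ) (hmm : Measurable m)
    (hm : ∀ z, m z ∈ Icc (0 : ℝ) 1) (hpi : Integrable (pw γ r)) (hqi : Integrable (qw γ r δ))
    (hF : Measurable F) (hb : ∀ z, ‖z‖ < δ → |F z| ≤ c) :
    Integrable (fun z => F z * pw γ r z) ∧ Integrable (fun z => F z * (qw γ r δ z * m z)) ∧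
    Integrable (fun z => F z * (pw γ r z + qw γ r δ z * m z)) ∧
    ∫ z, F z * (pw γ r z + qw γ r δ z * m z) =
      (∫ z, F z * pw γ r z) + ∫ z, F z * (qw γ r δ z * m z) := by
  have h1 : Integrable (fun z => F z * pw γ r z) :=
    aux_integ _ _ c hpi hF fun z hz => hb z ((pw_supp hz).trans_le hr)
  have h2 : Integrable (fun z => F z * (qw γ r δ z * m z)) :=
    aux_integ _ _ c (aux_qm γ r δ m hmm hm hqi) hF fun z hz =>
      hb z (qw_supp (left_ne_zero_of_mul hz)).2
  refine ⟨h1, h2, ?_, ?_⟩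
  · simp only [mul_add]
    exact h1.add h2
  · rw [← integral_add h1 h2]
    simp only [mul_add]

lemma aux_barrier (γ : ℝ → ℝ) (r δ D R : ℝ) (hr : 0 < r) (hrδ : r ≤ δ) (hR : 0 < R)
    (m : E2 → ℝ) (hmm : Measurable m)
    (hm : ∀ z, m z ∈ Icc (0 : ℝ) 1) (hpi : Integrable (pw γ r)) (hqi : Integrable (qw γ r δ))
    (hq0 : ∀ z, 0 ≤ qw γ r δ z)
    (hpD : ∫ z, ‖z‖ ^ 2 * pw γ r z = 2 - D) (hqD : ∫ z, ‖z‖ ^ 2 * qw γ r δ z = D)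
    (hD1 : D ≤ 1 / 2) (hD2 : 4 * R * D / r ≤ 1) (a : E2) (ha : ‖a‖ ≤ R) :
    1 ≤ ∫ z, (2 * inner ℝ a z + ‖z‖ ^ 2) * (pw γ r z + qw γ r δ z * m z) := by
  have hδ : 0 < δ := by linarith
  have hl : ∀ z, |2 * inner ℝ a z| ≤ 2 * R * ‖z‖ := by
    intro z
    rw [abs_mul, abs_two]
    have := (abs_real_inner_le_norm a z).trans (mul_le_mul_of_nonneg_right ha (norm_nonneg z))
    linarith
  obtain ⟨-, -, i1, s1⟩ := aux_split γ r δ (2 * R * δ) hrδ m (fun z => 2 * inner ℝ a z) hmm hm hpi hqi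
    (by fun_prop) (fun z hz => (hl z).trans (by gcongr))
  obtain ⟨-, -, i2, s2⟩ := aux_split γ r δ (δ ^ 2) hrδ m (fun z => ‖z‖ ^ 2) hmm hm hpi hqi
    (by fun_prop) (fun z hz => by rw [abs_of_nonneg (by positivity)]; gcongr)
  have h0 : ∫ z, (2 * inner ℝ a z) * pw γ r z = 0 := by
    apply aux_odd
    · intro z; simp
    · intro z; simp [pw]
  have h1 := aux_shell γ r δ D (2 * R) hr (by positivity) m _ hm hqi hq0 hqD (fun z _ => hl z)
  have h2 : 0 ≤ ∫ z, ‖z‖ ^ 2 * (qw γ r δ z * m z) :=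
    integral_nonneg fun z => mul_nonneg (by positivity) (mul_nonneg (hq0 z) (hm z).1)
  simp only [add_mul (2 * inner ℝ a _)]
  rw [integral_add i1 i2, s1, s2, h0, hpD]
  have h3 : 2 * R * D / r ≤ 1 / 2 := by
    have : 4 * R * D / r = 2 * (2 * R * D / r) := by ring
    linarith
  have := (abs_le.mp h1).1
  linarith

lemma aux_consist (γ : ℝ → ℝ) (r δ D M : ℝ) (hr : δ / 2 ≤ r) (hrδ : r ≤ δ) (hδ : 0 < δ)
    (hδ1 : δ ≤ 1)
    (m : E2 → ℝ) (hmm : Measurable m)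
    (hm : ∀ z, m z ∈ Icc (0 : ℝ) 1) (hpi : Integrable (pw γ r)) (hqi : Integrable (qw γ r δ))
    (hp0 : ∀ᵐ z, 0 ≤ pw γ r z) (hq0 : ∀ z, 0 ≤ qw γ r δ z)
    (hpD : ∫ z, ‖z‖ ^ 2 * pw γ r z = 2 - D) (hqD : ∫ z, ‖z‖ ^ 2 * qw γ r δ z = D)
    (F : E2 → ℝ) (hFm : Measurable F)
    (T1 : ContinuousMultilinearMap ℝ (fun _ : Fin 1 => E2) ℝ)
    (T2 : ContinuousMultilinearMap ℝ (fun _ : Fin 2 => E2) ℝ)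
    (T3 : ContinuousMultilinearMap ℝ (fun _ : Fin 3 => E2) ℝ)
    (hT2 : ‖T2‖ ≤ M)
    (hF : ∀ z, ‖z‖ < δ → |F z - (T1 (fun _ => z) + T2 (fun _ => z) / 2 + T3 (fun _ => z) / 6)|
      ≤ M * ‖z‖ ^ 4 ∧ |F z| ≤ M * ‖z‖) :
    |2 * (∫ z, F z * (pw γ r z + qw γ r δ z * m z)) -
      ∑ i : Fin 2, T2 ![EuclideanSpace.single i 1, EuclideanSpace.single i 1]|
      ≤ 5 * M * (δ ^ 2 + δ⁻¹ * D) := by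
  have hM : 0 ≤ M := (norm_nonneg _).trans hT2
  have hr0 : 0 < r := by linarith
  have hD0 : 0 ≤ D := by
    rw [← hqD]; exact integral_nonneg fun z => mul_nonneg (by positivity) (hq0 z)
  obtain ⟨i1, i2, -, s⟩ := aux_split γ r δ (M * δ) hrδ m F hmm hm hpi hqi hFm
    (fun z hz => (hF z hz).2.trans (by gcongr))
  have hsh := aux_shell γ r δ D M hr0 hM m F hm hqi hq0 hqD (fun z hz => (hF z hz).2)
  have hTi : ∀ (n : ℕ) (T : ContinuousMultilinearMap ℝ (fun _ : Fin n => E2) ℝ),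
      Integrable (fun z => T (fun _ => z) * pw γ r z) := by
    intro n T
    refine aux_integ _ _ (‖T‖ * r ^ n) hpi ?_ ?_
    · have : Continuous (fun z : E2 => T (fun _ => z)) :=
        T.cont.comp (continuous_pi fun _ => continuous_id)
      exact this.measurable
    · intro z hz
      have h1 := T.le_opNorm (fun _ => z)
      simp only [Finset.prod_const, Finset.card_univ, Fintype.card_fin, Real.norm_eq_abs] at h1
      have h2 := (pw_supp hz).le
      exact h1.trans (by gcongr)
  have e1 : ∫ z, T1 (fun _ => z) * pw γ r z = 0 := by
    apply aux_odd
    · intro z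
      have : (fun _ : Fin 1 => -z) = fun _ : Fin 1 => (-1 : ℝ) • z := by simp
      rw [this, T1.map_smul_univ (fun _ => (-1 : ℝ)) (fun _ => z)]; simp
    · intro z; simp [pw]
  have e3 : ∫ z, T3 (fun _ => z) * pw γ r z = 0 := by
    apply aux_odd
    · intro z
      have : (fun _ : Fin 3 => -z) = fun _ : Fin 3 => (-1 : ℝ) • z := by simp
      rw [this, T3.map_smul_univ (fun _ => (-1 : ℝ)) (fun _ => z)]; simp
      norm_num
    · intro z; simp [pw]
  have e2 := aux_quad T2 (pw γ r) (fun z => by simp [pw]) (hTi 2 T2)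
  set L := ∑ i : Fin 2, T2 ![EuclideanSpace.single i 1, EuclideanSpace.single i 1] with hL
  have hLb : |L| ≤ 2 * M := by
    have : ∀ i : Fin 2, |T2 ![EuclideanSpace.single i 1, EuclideanSpace.single i 1]| ≤ M := by
      intro i
      have h1 := T2.le_opNorm ![EuclideanSpace.single i 1, EuclideanSpace.single i 1]
      simp [Fin.prod_univ_two] at h1
      exact h1.trans hT2
    rw [hL, Fin.sum_univ_two]
    refine (abs_add_le _ _).trans ?_
    linarith [this 0, this 1]
  rw [hpD] at e2
  have hPi : Integrable (fun z => T1 (fun _ => z) * pw γ r z +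
      ((1 / 2) * (T2 (fun _ => z) * pw γ r z) + (1 / 6) * (T3 (fun _ => z) * pw γ r z))) :=
    (hTi 1 T1).add (((hTi 2 T2).const_mul _).add ((hTi 3 T3).const_mul _))
  have hP : ∫ z, (T1 (fun _ => z) * pw γ r z +
      ((1 / 2) * (T2 (fun _ => z) * pw γ r z) + (1 / 6) * (T3 (fun _ => z) * pw γ r z))) =
      1 / 4 * L * (2 - D) := by
    have i23 : Integrable (fun z => (1 / 2) * (T2 (fun _ => z) * pw γ r z) +
        (1 / 6) * (T3 (fun _ => z) * pw γ r z)) :=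
      ((hTi 2 T2).const_mul _).add ((hTi 3 T3).const_mul _)
    rw [integral_add (hTi 1 T1) i23,
      integral_add ((hTi 2 T2).const_mul _) ((hTi 3 T3).const_mul _), integral_const_mul,
      integral_const_mul, e1, e2, e3]
    ring
  have i0 : Integrable (fun z => ‖z‖ ^ 2 * pw γ r z) := by
    refine aux_integ _ _ (r ^ 2) hpi (by fun_prop) fun z hz => ?_
    have := (pw_supp hz)
    rw [abs_of_nonneg (by positivity)]
    gcongr
  have hrem := norm_integral_le_of_norm_le (f := fun z => F z * pw γ r z -
      (T1 (fun _ => z) * pw γ r z +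
      ((1 / 2) * (T2 (fun _ => z) * pw γ r z) + (1 / 6) * (T3 (fun _ => z) * pw γ r z))))
      (i0.const_mul (M * δ ^ 2)) (by
      filter_upwards [hp0] with z hz
      by_cases h : pw γ r z = 0
      · simp [h]
      · have h1 := (pw_supp h).trans_le hrδ
        have h2 := (hF z h1).1
        have h3 : F z * pw γ r z -
          (T1 (fun _ => z) * pw γ r z +
          ((1 / 2) * (T2 (fun _ => z) * pw γ r z) + (1 / 6) * (T3 (fun _ => z) * pw γ r z))) =
          (F z - (T1 (fun _ => z) + T2 (fun _ => z) / 2 + T3 (fun _ => z) / 6)) * pw γ r z := by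
          ring
        rw [h3, Real.norm_eq_abs, abs_mul, abs_of_nonneg hz, ← mul_assoc]
        refine mul_le_mul_of_nonneg_right (h2.trans ?_) hz
        have h4 : ‖z‖ ^ 2 ≤ δ ^ 2 := by gcongr
        calc M * ‖z‖ ^ 4 = M * ‖z‖ ^ 2 * ‖z‖ ^ 2 := by ring
          _ ≤ M * δ ^ 2 * ‖z‖ ^ 2 := by gcongr)
  rw [integral_sub i1 hPi, hP, integral_const_mul, hpD, Real.norm_eq_abs] at hrem
  rw [s]
  have hDr : M * D / r ≤ 2 * (M * (δ⁻¹ * D)) := by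
    rw [div_le_iff₀ hr0]
    have h1 : 1 ≤ 2 * (δ⁻¹ * r) := by
      have : δ⁻¹ * r = r / δ := by ring
      rw [this]
      have : 1 / 2 ≤ r / δ := by rw [le_div_iff₀ hδ]; linarith
      linarith
    nlinarith [mul_nonneg hM hD0]
  have hDδ : D ≤ δ⁻¹ * D := by
    have : 1 ≤ δ⁻¹ := (one_le_inv₀ hδ).mpr hδ1
    nlinarith
  have hLD : |L * D / 2| ≤ M * (δ⁻¹ * D) := by
    rw [abs_div, abs_mul, abs_two, abs_of_nonneg hD0]
    have := mul_le_mul hLb hDδ hD0 (by linarith)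
    linarith
  have hM2 : M * δ ^ 2 * (2 - D) ≤ 2 * (M * δ ^ 2) := by
    have : 0 ≤ M * δ ^ 2 * D := by positivity
    linarith
  have hMδ : 0 ≤ M * δ ^ 2 := by positivity
  rw [abs_le] at *
  constructor <;> linarith [hrem.1, hrem.2, hsh.1, hsh.2, hLD.1, hLD.2]

lemma aux_transport (γ : ℝ → ℝ) (r δ : ℝ) (hrδ : r ≤ δ) (T : Set E2) (hT : MeasurableSet T) (x : E2)
    (hb : ball x δ ⊆ T) (K m : E2 → ℝ) (hm1 : ∀ z, ‖z‖ ≤ r → m z = 1)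
    (hm0 : ∀ z, δ ≤ ‖z‖ → m z = 0)
    (hK : ∀ᵐ z, K (x + z) = γ ‖z‖ * m z) (G : E2 → ℝ) :
    ∫ y in T, G y * K y = ∫ z, G (x + z) * (pw γ r z + qw γ r δ z * m z) := by
  rw [← integral_indicator hT, ← integral_add_left_eq_self _ x]
  apply integral_congr_ae
  filter_upwards [hK] with z hz
  by_cases h : ‖z‖ < δ
  · have hin : x + z ∈ T := hb (by simpa using h)
    rw [indicator_of_mem hin, hz]
    by_cases h2 : ‖z‖ < r
    · have h3 : ¬ r ≤ ‖z‖ := by linarith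
      simp [pw, qw, indicator, h2, h3, hm1 z h2.le]
    · have h3 : r ≤ ‖z‖ := by linarith
      simp [pw, qw, indicator, h2, h3, h]
  · have h1 : m z = 0 := hm0 z (by linarith)
    have h2 : ¬ ‖z‖ < r := by linarith
    have h3 : K (x + z) = 0 := by rw [hz, h1, mul_zero]
    simp [pw, indicator, h1, h2, h3]

lemma aux_comp (γ : ℝ → ℝ) (r δ D R : ℝ) (hr : 0 < r) (hrδ : r ≤ δ) (hR : 0 < R)
    (hpi : Integrable (pw γ r)) (hqi : Integrable (qw γ r δ))
    (hp0 : ∀ᵐ z, 0 ≤ pw γ r z) (hq0 : ∀ z, 0 ≤ qw γ r δ z)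
    (hpD : ∫ z, ‖z‖ ^ 2 * pw γ r z = 2 - D) (hqD : ∫ z, ‖z‖ ^ 2 * qw γ r δ z = D)
    (hD1 : D ≤ 1 / 2) (hD2 : 4 * R * D / r ≤ 1) (Om T : Set E2) (xs : E2)
    (hball : ∀ x ∈ Om, ball x δ ⊆ T) (hTR : T ⊆ closedBall xs R)
    (m : E2 → E2 → ℝ) (hmm : ∀ x ∈ Om, Measurable (m x))
    (hm : ∀ x ∈ Om, ∀ z, m x z ∈ Icc (0 : ℝ) 1)
    (e : E2 → ℝ) (Ce : ℝ) (hem : Measurable e) (heb : ∀ y, |e y| ≤ Ce) (E : ℝ) (hE : 0 < E)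
    (hLe : ∀ x ∈ Om, -E ≤ 2 * ∫ z, (e (x + z) - e x) * (pw γ r z + qw γ r δ z * m x z))
    (b : ℝ) (hb : ∀ x ∈ T, x ∉ Om → e x ≤ b) :
    ∀ x ∈ T, e x ≤ b + E * R ^ 2 := by
  have hδ : 0 < δ := by linarith
  have hnT : ∀ y ∈ T, ‖y - xs‖ ≤ R := fun y hy => by
    simpa [dist_eq_norm] using hTR hy
  have hφ : ∀ y ∈ T, E * ‖y - xs‖ ^ 2 ≤ E * R ^ 2 := fun y hy => by
    have := hnT y hy
    gcongr
  have hN : 0 ≤ ∫ z, (pw γ r z + qw γ r δ z) := by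
    apply integral_nonneg_of_ae
    filter_upwards [hp0] with z hz
    exact add_nonneg hz (hq0 z)
  have := aux_maxprinciple T Om (fun y => e y + E * ‖y - xs‖ ^ 2) (E / 2)
    (∫ z, (pw γ r z + qw γ r δ z)) (b + E * R ^ 2) (Ce + E * R ^ 2) (by positivity) hN
    (fun x hx => add_le_add ((le_abs_self _).trans (heb x)) (hφ x hx)) ?_
    (fun x hx hxO => add_le_add (hb x hx hxO) (hφ x hx))
  · intro x hx
    have h1 := this x hx
    have h2 : 0 ≤ E * ‖x - xs‖ ^ 2 := by positivity
    linarith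
  intro x hx S hS
  have hxT : x ∈ T := hball x hx (mem_ball_self hδ)
  set w : E2 → ℝ := fun y => e y + E * ‖y - xs‖ ^ 2 with hw
  change E / 2 ≤ (S - w x) * _
  have hbar := aux_barrier γ r δ D R hr hrδ hR (m x) (hmm x hx) (hm x hx) hpi hqi hq0 hpD hqD hD1 hD2
    (x - xs) (hnT x hxT)
  have hL := hLe x hx
  obtain ⟨-, -, i1, -⟩ := aux_split γ r δ (Ce + Ce) hrδ (m x) (fun z => e (x + z) - e x)
      (hmm x hx) (hm x hx) hpi hqi (by fun_prop)
      (fun z _ => (abs_sub _ _).trans (add_le_add (heb _) (heb _)))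
  obtain ⟨-, -, i2, -⟩ := aux_split γ r δ (2 * (R * δ) + δ ^ 2) hrδ (m x)
      (fun z => 2 * inner ℝ (x - xs) z + ‖z‖ ^ 2)
      (hmm x hx) (hm x hx) hpi hqi (by fun_prop)
      (fun z hz => by
        refine (abs_add_le _ _).trans (add_le_add ?_ ?_)
        · rw [abs_mul, abs_two]
          have h1 := abs_real_inner_le_norm (x - xs) z
          have h2 : ‖x - xs‖ * ‖z‖ ≤ R * δ :=
            mul_le_mul (hnT x hxT) hz.le (norm_nonneg _) hR.le
          linarith
        · rw [abs_of_nonneg (by positivity)]; gcongr)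
  have hκi : Integrable (fun z => pw γ r z + qw γ r δ z * m x z) :=
    hpi.add (aux_qm γ r δ (m x) (hmm x hx) (hm x hx) hqi)
  have hsum : ∫ z, ((e (x + z) - e x) * (pw γ r z + qw γ r δ z * m x z) +
      E * ((2 * inner ℝ (x - xs) z + ‖z‖ ^ 2) * (pw γ r z + qw γ r δ z * m x z))) =
      (∫ z, (e (x + z) - e x) * (pw γ r z + qw γ r δ z * m x z)) +
      E * ∫ z, (2 * inner ℝ (x - xs) z + ‖z‖ ^ 2) * (pw γ r z + qw γ r δ z * m x z) := by
    rw [integral_add i1 (i2.const_mul E), integral_const_mul]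
  have hle : ∫ z, ((e (x + z) - e x) * (pw γ r z + qw γ r δ z * m x z) +
      E * ((2 * inner ℝ (x - xs) z + ‖z‖ ^ 2) * (pw γ r z + qw γ r δ z * m x z))) ≤
      ∫ z, (S - w x) * (pw γ r z + qw γ r δ z) := by
    apply integral_mono_ae (i1.add (i2.const_mul E)) ((hpi.add hqi).const_mul _)
    filter_upwards [hp0] with z hz
    have hκ0 : 0 ≤ pw γ r z + qw γ r δ z * m x z :=
      add_nonneg hz (mul_nonneg (hq0 z) (hm x hx z).1)
    have hκ1 : pw γ r z + qw γ r δ z * m x z ≤ pw γ r z + qw γ r δ z :=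
      add_le_add le_rfl (mul_le_of_le_one_right (hq0 z) (hm x hx z).2)
    have hSx : 0 ≤ S - w x := sub_nonneg.mpr (hS x hxT)
    by_cases hzδ : ‖z‖ < δ
    · have hin : x + z ∈ T := hball x hx (by simpa using hzδ)
      have hSz : w (x + z) ≤ S := hS _ hin
      have hn : ‖x + z - xs‖ ^ 2 = ‖x - xs‖ ^ 2 + 2 * inner ℝ (x - xs) z + ‖z‖ ^ 2 := by
        have : x + z - xs = (x - xs) + z := by abel
        rw [this, norm_add_sq_real]
      have heq : (e (x + z) - e x) * (pw γ r z + qw γ r δ z * m x z) +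
          E * ((2 * inner ℝ (x - xs) z + ‖z‖ ^ 2) * (pw γ r z + qw γ r δ z * m x z)) =
          (w (x + z) - w x) * (pw γ r z + qw γ r δ z * m x z) := by
        simp only [hw, hn]; ring
      refine le_trans (le_of_eq heq) ?_
      exact mul_le_mul (by linarith) hκ1 hκ0 hSx
    · have h1 : pw γ r z = 0 := by
        by_contra h; exact hzδ ((pw_supp h).trans_le hrδ)
      have h2 : qw γ r δ z = 0 := by
        by_contra h; exact hzδ (qw_supp h).2
      simp [h1, h2]
  rw [hsum, integral_const_mul] at hle
  have hE1 : E * 1 ≤ E * ∫ z, (2 * inner ℝ (x - xs) z + ‖z‖ ^ 2) *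
    (pw γ r z + qw γ r δ z * m x z) := mul_le_mul_of_nonneg_left hbar hE.le
  linarith

/-- uniform-norm error estimate for nonlocal problems with
non-symmetric polygonal interaction neighborhoods. -/
theorem stmt18 (Ω : Set (EuclideanSpace ℝ (Fin 2)))
    (hΩb : Bornology.IsBounded Ω) (hΩo : IsOpen Ω)
    (δ₀ : ℝ) (hδ₀ : δ₀ ∈ Ioc (0 : ℝ) 1) (μ : ℕ) (hμ : μ = 0 ∨ μ = 1)
    (A B M R : ℝ) (hA : 0 < A) (hB : 0 < B) (hM : 0 < M) (hR : 0 < R)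
    (xstar : EuclideanSpace ℝ (Fin 2)) (hcont : hatΩ Ω δ₀ ⊆ closedBall xstar R) :
    ∃ C > 0, ∀ δ ∈ Ioc (0 : ℝ) δ₀, ∀ r ∈ Icc (δ / 2) δ,
      ∀ γ : ℝ → ℝ, RadialKernel 2 δ γ →
      IntegrableOn (fun z : EuclideanSpace ℝ (Fin 2) => γ ‖z‖) (ball 0 δ) →
      ∀ D : ℝ,
        D = (∫ z in {z : EuclideanSpace ℝ (Fin 2) | r ≤ ‖z‖ ∧ ‖z‖ ≤ δ},
          ‖z‖ ^ 2 * γ ‖z‖) →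
        D ≤ 1 / 2 → 4 * R * D / r ≤ 1 →
      ∀ k : EuclideanSpace ℝ (Fin 2) → EuclideanSpace ℝ (Fin 2) → ℝ,
        Measurable (Function.uncurry k) →
        (∀ x ∈ hatΩ Ω δ, ∀ y ∈ hatΩ Ω δ, 0 ≤ k x y) →
        (∀ x ∈ Ω, ∃ m : EuclideanSpace ℝ (Fin 2) → ℝ, Measurable m ∧
          (∀ z, m z ∈ Icc (0 : ℝ) 1) ∧
          (∀ z, ‖z‖ ≤ r → m z = 1) ∧ (∀ z, δ ≤ ‖z‖ → m z = 0) ∧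
          (∀ᵐ z ∂volume, k x (x + z) = γ ‖z‖ * m z)) →
      ∀ u₀ : EuclideanSpace ℝ (Fin 2) → ℝ,
        (∃ V, IsOpen V ∧ closure (hatΩ Ω δ) ⊆ V ∧ ContDiffOn ℝ 4 u₀ V) →
        (∀ y ∈ hatΩ Ω δ, ∀ j ≤ 4, ‖iteratedFDeriv ℝ j u₀ y‖ ≤ M) →
      ∀ f : EuclideanSpace ℝ (Fin 2) → ℝ,
        (∀ x ∈ Ω, |f x - (-(lap 2 u₀ x))| ≤ A * δ ^ 2) →
      ∀ g : EuclideanSpace ℝ (Fin 2) → ℝ,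
        (∀ x ∈ omegaC Ω δ, |g x - u₀ x| ≤ B * δ ^ (2 + μ)) →
      ∀ u : EuclideanSpace ℝ (Fin 2) → ℝ, Measurable u →
        (∃ Mu : ℝ, ∀ x ∈ hatΩ Ω δ, |u x| ≤ Mu) →
        (∀ x ∈ Ω, -(2 * ∫ y in hatΩ Ω δ, (u y - u x) * k x y) = f x) →
        (∀ x ∈ omegaC Ω δ, u x = g x) →
      ∀ x ∈ Ω, |u x - u₀ x| ≤ C * (δ ^ 2 + δ⁻¹ * D) := by
  classical
  refine ⟨B + (A + 5 * M) * R ^ 2, by positivity, ?_⟩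
  intro δ hδ r hr γ hγ hi D hD hD1 hD2 k hk hk0 hkm u₀ hu₀ hM4 f hf g hg u hu hub hEq hbc
  obtain ⟨hδ0, hδδ⟩ := hδ
  have hδ1 : δ ≤ 1 := hδδ.trans hδ₀.2
  have hr0 : 0 < r := by linarith [hr.1]
  obtain ⟨hpi, hqi, hp0, hq0, hpD, hqD⟩ := aux_facts γ r δ D hδ0 hr hγ hi hD
  have hD0 : 0 ≤ D := by
    rw [← hqD]; exact integral_nonneg fun z => mul_nonneg (by positivity) (hq0 z)
  set T := hatΩ Ω δ with hTdef
  have hTm : MeasurableSet T := aux_hat_meas Ω hΩo δ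
  have hball : ∀ x ∈ Ω, ball x δ ⊆ T := fun x hx => aux_ball_subset Ω δ x hx
  have hTR : T ⊆ closedBall xstar R := (aux_hat_mono Ω δ δ₀ hδδ).trans hcont
  have hΩT : Ω ⊆ T := subset_union_left
  obtain ⟨V, hVo, hTV, hCD⟩ := hu₀
  have hTV' : T ⊆ V := subset_closure.trans hTV
  obtain ⟨Mu, hMu⟩ := hub
  choose! m hmm hm hm1 hm0 hkae using hkm
  set U := T.piecewise u 0 with hU
  set U0 := T.piecewise u₀ 0 with hU0
  have hUm : Measurable U := hu.piecewise hTm measurable_const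
  have hU0m : Measurable U0 :=
    (hCD.continuousOn.mono hTV').measurable_piecewise continuousOn_const hTm
  have hUT : ∀ y ∈ T, U y = u y := fun y hy => piecewise_eq_of_mem _ _ _ hy
  have hU0T : ∀ y ∈ T, U0 y = u₀ y := fun y hy => piecewise_eq_of_mem _ _ _ hy
  have hUb : ∀ y, |U y| ≤ |Mu| := by
    intro y
    by_cases hy : y ∈ T
    · rw [hUT y hy]; exact (hMu y hy).trans (le_abs_self _)
    · simp [hU, hy]
  have hU0b : ∀ y, |U0 y| ≤ M := by
    intro y
    by_cases hy : y ∈ T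
    · rw [hU0T y hy]
      have := hM4 y hy 0 (by norm_num)
      simpa using this
    · simp [hU0, hy, hM.le]
  set E := (A + 5 * M) * (δ ^ 2 + δ⁻¹ * D) with hEdef
  have hE0 : 0 < E := by positivity
  have hmain : ∀ x ∈ Ω, |2 * ∫ z, ((U - U0) (x + z) - (U - U0) x) *
      (pw γ r z + qw γ r δ z * m x z)| ≤ E := by
    intro x hx
    have t1 := aux_transport γ r δ hr.2 T hTm x (hball x hx) (k x) (m x) (hm1 x hx) (hm0 x hx)
      (hkae x hx) (fun y => U y - U x)
    have t2 : ∫ y in T, (u y - u x) * k x y = ∫ y in T, (U y - U x) * k x y := by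
      refine setIntegral_congr_fun hTm fun y hy => ?_
      simp only [hUT y hy, hUT x (hΩT hx)]
    have t3 := hEq x hx
    rw [t2, t1] at t3
    have c := aux_consist γ r δ D M hr.1 hr.2 hδ0 hδ1 (m x) (hmm x hx) (hm x hx) hpi hqi hp0 hq0
      hpD hqD (fun z => U0 (x + z) - U0 x) (by fun_prop) (iteratedFDeriv ℝ 1 u₀ x)
      (iteratedFDeriv ℝ 2 u₀ x) (iteratedFDeriv ℝ 3 u₀ x) (hM4 x (hΩT hx) 2 (by norm_num))
      (by
        intro z hz
        have hin : ∀ t ∈ Icc (0 : ℝ) 1, x + t • z ∈ T := by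
          intro t ht
          apply hball x hx
          rw [mem_ball, dist_self_add_left, norm_smul, Real.norm_eq_abs, abs_of_nonneg ht.1]
          nlinarith [norm_nonneg z, ht.2]
        have h1 : x + z ∈ T := by simpa using hin 1 (by simp)
        simp only [hU0T _ h1, hU0T x (hΩT hx)]
        exact aux_taylor u₀ x z M
          (fun t ht => hCD.contDiffAt (hVo.mem_nhds (hTV' (hin t ht))))
          (fun t ht j hj => hM4 _ (hin t ht) j hj))
    change |_ - lap 2 u₀ x| ≤ _ at c
    obtain ⟨-, -, i1, -⟩ := aux_split γ r δ (|Mu| + |Mu|) hr.2 (m x) (fun z => U (x + z) - U x)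
      (hmm x hx) (hm x hx) hpi hqi (by fun_prop)
      (fun z _ => (abs_sub _ _).trans (add_le_add (hUb _) (hUb _)))
    obtain ⟨-, -, i2, -⟩ := aux_split γ r δ (M + M) hr.2 (m x) (fun z => U0 (x + z) - U0 x)
      (hmm x hx) (hm x hx) hpi hqi (by fun_prop)
      (fun z _ => (abs_sub _ _).trans (add_le_add (hU0b _) (hU0b _)))
    have hs : ∀ z, ((U - U0) (x + z) - (U - U0) x) * (pw γ r z + qw γ r δ z * m x z) =
        (U (x + z) - U x) * (pw γ r z + qw γ r δ z * m x z) -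
        (U0 (x + z) - U0 x) * (pw γ r z + qw γ r δ z * m x z) := by
      intro z; simp only [Pi.sub_apply]; ring
    simp only [hs]
    rw [integral_sub i1 i2]
    have hfx := hf x hx
    have hAD : 0 ≤ A * (δ⁻¹ * D) := by positivity
    rw [abs_le] at *
    constructor <;> linarith [c.1, c.2, hfx.1, hfx.2]
  have hbd : ∀ x ∈ T, x ∉ Ω → |(U - U0) x| ≤ B * δ ^ 2 := by
    intro x hx hxO
    have hxc : x ∈ omegaC Ω δ := hx.resolve_left hxO
    rw [Pi.sub_apply, hUT x hx, hU0T x hx, hbc x hxc]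
    refine (hg x hxc).trans ?_
    exact mul_le_mul_of_nonneg_left
      (pow_le_pow_of_le_one hδ0.le hδ1 (Nat.le_add_right 2 μ)) hB.le
  have heb : ∀ y, |(U - U0) y| ≤ |Mu| + M := fun y =>
    (abs_sub _ _).trans (add_le_add (hUb _) (hU0b _))
  have up := aux_comp γ r δ D R hr0 hr.2 hR hpi hqi hp0 hq0 hpD hqD hD1 hD2 Ω T xstar hball hTR
    m hmm hm (U - U0) (|Mu| + M) (hUm.sub hU0m) heb E hE0
    (fun x hx => (abs_le.mp (hmain x hx)).1) (B * δ ^ 2)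
    (fun x hx hxO => (abs_le.mp (hbd x hx hxO)).2)
  have lo := aux_comp γ r δ D R hr0 hr.2 hR hpi hqi hp0 hq0 hpD hqD hD1 hD2 Ω T xstar hball hTR
    m hmm hm (-(U - U0)) (|Mu| + M) (hUm.sub hU0m).neg
    (fun y => by rw [Pi.neg_apply, abs_neg]; exact heb y) E hE0
    (fun x hx => by
      have h1 : ∀ z, ((-(U - U0)) (x + z) - (-(U - U0)) x) * (pw γ r z + qw γ r δ z * m x z) =
        -(((U - U0) (x + z) - (U - U0) x) * (pw γ r z + qw γ r δ z * m x z)) := by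
        intro z; simp only [Pi.neg_apply]; ring
      simp only [h1, integral_neg]
      linarith [(abs_le.mp (hmain x hx)).2]) (B * δ ^ 2)
    (fun x hx hxO => by
      rw [Pi.neg_apply]; linarith [(abs_le.mp (hbd x hx hxO)).1])
  intro x hx
  have hxT := hΩT hx
  have h1 := up x hxT
  have h2 := lo x hxT
  rw [Pi.neg_apply] at h2
  rw [Pi.sub_apply, hUT x hxT, hU0T x hxT] at h1 h2
  have h3 : B * δ ^ 2 + E * R ^ 2 ≤ (B + (A + 5 * M) * R ^ 2) * (δ ^ 2 + δ⁻¹ * D) := by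
    have : 0 ≤ B * (δ⁻¹ * D) := by positivity
    rw [hEdef]; linarith
  rw [abs_le]
  constructor <;> linarith
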